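/- arXiv:2401.10086 — 2 statements merged into one kernel-verified Lean document; each statement's English description precedes it below -/
import Mathlib

section
/- For every ε > 0 there exists a constant C = C(ε) such that for all real H ≥ 2 and all monic polynomials f ∈ ℚ[X] of degree 2, the number of 2×2 matrices with all entries in F(H) whose characteristic polynomial equals f is at most C·H^{2+ε}. -/
/-- The set of rationals `a/b` in lowest terms with `|a| ≤ H` and `1 ≤ b ≤ H`. -/
def Farey (H : ℝ) : Set ℚ := {x : ℚ | |(x.num : ℝ)| ≤ H ∧ (x.den : ℝ) ≤ H}

lemma divisor_bound (δ : ℝ) (hδ : 0 < δ) :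
    ∃ C : ℝ, 1 ≤ C ∧ ∀ n : ℕ, n ≠ 0 → (n.divisors.card : ℝ) ≤ C * (n : ℝ) ^ δ := by
  set c : ℝ := 1 + 1 / (δ * Real.log 2) with hc
  have hl2 : 0 < Real.log 2 := Real.log_pos (by norm_num)
  have hc1 : 1 ≤ c := by
    have : 0 < 1 / (δ * Real.log 2) := by positivity
    linarith
  set K : ℝ := (2 : ℝ) ^ (1 / δ) with hK
  refine ⟨c ^ (⌈K⌉₊), one_le_pow₀ hc1, fun n hn => ?_⟩
  rw [Nat.card_divisors hn]
  have hn' : (n : ℝ) ^ δ = ∏ p ∈ n.primeFactors, ((p : ℝ) ^ δ) ^ (n.factorization p) := by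
    conv_lhs => rw [← Nat.prod_factorization_pow_eq_self hn]
    rw [Finsupp.prod, Nat.support_factorization]
    push_cast
    rw [← Real.finsetProd_rpow _ _ (fun i _ => by positivity)]
    refine Finset.prod_congr rfl fun p _ => ?_
    rw [← Real.rpow_natCast, ← Real.rpow_mul (by positivity), mul_comm,
      Real.rpow_mul (by positivity), Real.rpow_natCast]
  have h1 : ∀ p ∈ n.primeFactors, ((n.factorization p : ℝ) + 1) ≤
      (if p < ⌈K⌉₊ then c else 1) * ((p : ℝ) ^ δ) ^ (n.factorization p) := by
    intro p hp
    have hp2 : 2 ≤ p := (Nat.prime_of_mem_primeFactors hp).two_le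
    have hp2' : (2 : ℝ) ≤ p := by exact_mod_cast hp2
    set k := n.factorization p
    split_ifs with h
    · have h2 : (2 : ℝ) ^ δ ≤ (p : ℝ) ^ δ := Real.rpow_le_rpow (by norm_num) hp2' hδ.le
      have h3 : ((2 : ℝ) ^ δ) ^ k ≤ ((p : ℝ) ^ δ) ^ k := by gcongr
      have h4 : ((2 : ℝ) ^ δ) ^ k = Real.exp (k * (δ * Real.log 2)) := by
        rw [Real.rpow_def_of_pos (by norm_num), ← Real.exp_nat_mul]
        ring_nf
      have h5 := Real.add_one_le_exp (k * (δ * Real.log 2))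
      have h6 : 1 ≤ Real.exp (k * (δ * Real.log 2)) := Real.one_le_exp (by positivity)
      have h7 : (k : ℝ) ≤ 1 / (δ * Real.log 2) * Real.exp (k * (δ * Real.log 2)) := by
        rw [one_div, ← div_eq_inv_mul, le_div_iff₀ (by positivity)]
        linarith
      calc (k : ℝ) + 1 ≤ c * Real.exp (k * (δ * Real.log 2)) := by rw [hc]; linarith
        _ ≤ _ := by rw [← h4]; gcongr
    · have h2 : K ≤ p := by
        have := Nat.le_ceil K
        push Not at h
        exact this.trans (by exact_mod_cast h)
      have h3 : 2 ≤ (p : ℝ) ^ δ := by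
        have : K ^ δ ≤ (p : ℝ) ^ δ := Real.rpow_le_rpow (by positivity) h2 hδ.le
        rw [hK, ← Real.rpow_mul (by norm_num), one_div, inv_mul_cancel₀ hδ.ne', Real.rpow_one] at this
        exact this
      have h4 : (2 : ℝ) ^ k ≤ ((p : ℝ) ^ δ) ^ k := by gcongr
      have h5 : ((k : ℝ) + 1) ≤ 2 ^ k := by exact_mod_cast (Nat.lt_two_pow_self : k < 2 ^ k)
      linarith
  push_cast
  calc ∏ p ∈ n.primeFactors, ((n.factorization p : ℝ) + 1)
      ≤ ∏ p ∈ n.primeFactors, ((if p < ⌈K⌉₊ then c else 1) * ((p : ℝ) ^ δ) ^ (n.factorization p)) :=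
        Finset.prod_le_prod (fun i _ => by positivity) h1
    _ = (∏ p ∈ n.primeFactors, (if p < ⌈K⌉₊ then c else 1)) * (n : ℝ) ^ δ := by
        rw [Finset.prod_mul_distrib, hn']
    _ ≤ c ^ (⌈K⌉₊) * (n : ℝ) ^ δ := by
        gcongr
        rw [Finset.prod_ite, Finset.prod_const, Finset.prod_const_one, mul_one]
        refine pow_le_pow_right₀ hc1 ?_
        calc _ ≤ (Finset.range ⌈K⌉₊).card := Finset.card_le_card (by
              intro p hp
              simp only [Finset.mem_filter] at hp
              simpa using hp.2)
          _ = _ := by simp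

lemma coprime_dens (g : ℕ) (hg : Squarefree g) (A B : ℚ) (z : ℤ) (h : (g : ℚ) * A * B = z) :
    Nat.Coprime A.den B.den := by
  refine Nat.coprime_of_dvd ?_
  intro l hl ha hb
  have h1 : (g : ℤ) * A.num * B.num = z * A.den * B.den := by
    have : (g : ℚ) * A.num * B.num = z * A.den * B.den := by
      rw [← h]
      have ha := Rat.mul_den_eq_num A
      have hb := Rat.mul_den_eq_num B
      rw [← ha, ← hb]; ring
    exact_mod_cast this
  have h2 : (g : ℕ) * A.num.natAbs * B.num.natAbs = z.natAbs * A.den * B.den := by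
    have := congrArg Int.natAbs h1
    simpa [Int.natAbs_mul] using this
  have h3 : l * l ∣ g * (A.num.natAbs * B.num.natAbs) := by
    rw [← mul_assoc, h2, mul_assoc]
    exact Dvd.dvd.mul_left (mul_dvd_mul ha hb) _
  have ca : Nat.Coprime l A.num.natAbs := (Nat.Coprime.coprime_dvd_right ha A.reduced).symm
  have cb : Nat.Coprime l B.num.natAbs := (Nat.Coprime.coprime_dvd_right hb B.reduced).symm
  have cc : Nat.Coprime (l * l) (A.num.natAbs * B.num.natAbs) := by
    apply Nat.Coprime.mul_left <;> exact Nat.Coprime.mul_right ca cb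
  have h4 : l * l ∣ g := cc.dvd_of_dvd_mul_right h3
  have := hg l h4
  exact hl.one_lt.ne' (Nat.isUnit_iff.mp this)

lemma fiber_card (T : Finset ℚ) (w : ℕ) (L : ℝ) (hL : 0 ≤ L)
    (h1 : ∀ y ∈ T, ∀ y' ∈ T, ((w : ℚ) * (y - y')).den = 1)
    (hw : 0 < w)
    (h2 : ∀ y ∈ T, ∀ y' ∈ T, (((w : ℚ) * (y - y') : ℚ) : ℝ) ≤ L) :
    (T.card : ℝ) ≤ 1 + L := by
  rcases T.eq_empty_or_nonempty with rfl | hT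
  · simp; linarith
  have hm := T.min'_mem hT
  set y1 := T.min' hT with hy1
  have hfl : 0 ≤ ⌊L⌋ := Int.floor_nonneg.mpr hL
  have key : T.card ≤ (Finset.Icc (0 : ℤ) ⌊L⌋).card := by
    refine Finset.card_le_card_of_injOn (fun y => ((w : ℚ) * (y - y1)).num) ?_ ?_
    · intro y hy
      have e := Rat.coe_int_num_of_den_eq_one (h1 y hy y1 hm)
      simp only [Finset.coe_Icc, Set.mem_Icc]
      constructor
      · rw [Rat.num_nonneg]
        have : y1 ≤ y := T.min'_le y hy
        have : 0 ≤ y - y1 := by linarith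
        positivity
      · rw [Int.le_floor]
        have := h2 y hy y1 hm
        rw [← e] at this
        exact_mod_cast this
    · intro y hy y' hy' heq
      have e := Rat.coe_int_num_of_den_eq_one (h1 y hy y1 hm)
      have e' := Rat.coe_int_num_of_den_eq_one (h1 y' hy' y1 hm)
      simp only at heq
      rw [heq, e'] at e
      have hw' : (w : ℚ) ≠ 0 := by positivity
      have := mul_left_cancel₀ hw' e
      linarith
  rw [Int.card_Icc] at key
  have : (T.card : ℤ) ≤ ⌊L⌋ + 1 := by omega
  have h3 : (T.card : ℝ) ≤ ⌊L⌋ + 1 := by exact_mod_cast this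
  have := Int.floor_le L
  linarith

/-- The number of `y` for a fixed `Q = w ^ 2 * g`. -/
lemma count_y (S : Finset ℚ) (w g X : ℕ) (hw : 0 < w) (hg : Squarefree g) (Δ : ℚ) (D : ℝ)
    (hX : 0 < X)
    (hD : ∀ n : ℕ, n ≠ 0 → n ≤ X → (n.divisors.card : ℝ) ≤ D)
    (hden : ∀ y ∈ S, y.den ≤ X)
    (hS : ∀ y ∈ S, ∃ P : ℤ, ((w ^ 2 * g : ℕ) : ℚ) * (Δ - y ^ 2) = 4 * P ∧ |P| ≤ X) :
    (S.card : ℝ) ≤ (1 + 3 * √(X / g : ℝ)) * (2 * D) := by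
  have hD1 : 1 ≤ D := by
    have := hD 1 one_ne_zero hX
    simpa using this
  rcases S.eq_empty_or_nonempty with rfl | ⟨y0, hy0⟩
  · simp; positivity
  have hg0 : 0 < g := Nat.pos_of_ne_zero hg.ne_zero
  have cop : ∀ y ∈ S, Nat.Coprime ((w : ℚ) * (y - y0)).den ((w : ℚ) * (y + y0)).den := by
    intro y hy
    obtain ⟨P, hP, -⟩ := hS y hy
    obtain ⟨P0, hP0, -⟩ := hS y0 hy0
    refine coprime_dens g hg _ _ (4 * P0 - 4 * P) ?_
    push_cast at hP hP0 ⊢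
    rw [← hP, ← hP0]; ring
  set E : ℕ := (2 * (w : ℚ) * y0).den with hE
  have hEX : E ≤ X := by
    have h1 : E ∣ y0.den := by
      have := Rat.mul_den_dvd ((2 * w : ℤ) : ℚ) y0
      rw [Rat.den_intCast, one_mul] at this
      rw [hE]
      convert this using 3
      push_cast; ring
    exact (Nat.le_of_dvd y0.den_pos h1).trans (hden y0 hy0)
  have hE0 : E ≠ 0 := Rat.den_nz _
  have maps : ∀ y ∈ S, (((w : ℚ) * (y - y0)).den, decide (0 ≤ y)) ∈
      E.divisors ×ˢ (Finset.univ : Finset Bool) := by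
    intro y hy
    simp only [Finset.mem_product, Nat.mem_divisors, Finset.mem_univ, and_true]
    refine ⟨?_, hE0⟩
    have h1 : (w : ℚ) * (y - y0) = (w : ℚ) * (y + y0) - 2 * (w : ℚ) * y0 := by ring
    have h2 := Rat.sub_den_dvd ((w : ℚ) * (y + y0)) (2 * (w : ℚ) * y0)
    rw [← h1] at h2
    exact (cop y hy).dvd_of_dvd_mul_left h2
  have hs := Finset.card_eq_sum_card_fiberwise (f := fun y : ℚ =>
    (((w : ℚ) * (y - y0)).den, decide (0 ≤ y))) (s := S) maps
  have hfib : ∀ k ∈ E.divisors ×ˢ (Finset.univ : Finset Bool),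
      ((S.filter (fun y : ℚ => (((w : ℚ) * (y - y0)).den, decide (0 ≤ y)) = k)).card : ℝ) ≤
        1 + 3 * √(X / g : ℝ) := by
    rintro ⟨α, s⟩ -
    refine fiber_card _ w _ (by positivity) ?_ hw ?_
    · intro y hy y' hy'
      simp only [Finset.mem_filter, Prod.mk.injEq] at hy hy'
      obtain ⟨hy, hα, -⟩ := hy
      obtain ⟨hy', hα', -⟩ := hy'
      have c := cop y hy
      have c' := cop y' hy'
      rw [hα] at c
      rw [hα'] at c'
      have d1 : ((w : ℚ) * (y - y')).den ∣ α := by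
        have := Rat.sub_den_dvd_lcm ((w : ℚ) * (y - y0)) ((w : ℚ) * (y' - y0))
        rw [hα, hα', Nat.lcm_self] at this
        convert this using 2
        ring
      have d2 : ((w : ℚ) * (y - y')).den ∣ ((w : ℚ) * (y + y0)).den * ((w : ℚ) * (y' + y0)).den := by
        have := Rat.sub_den_dvd ((w : ℚ) * (y + y0)) ((w : ℚ) * (y' + y0))
        convert this using 2
        ring
      exact Nat.eq_one_of_dvd_coprimes (Nat.Coprime.mul_right c c') d1 d2
    · intro y hy y' hy'
      simp only [Finset.mem_filter, Prod.mk.injEq] at hy hy'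
      obtain ⟨hy, -, hs⟩ := hy
      obtain ⟨hy', -, hs'⟩ := hy'
      obtain ⟨P, hP, hPX⟩ := hS y hy
      obtain ⟨P', hP', hPX'⟩ := hS y' hy'
      have hsgn : (y - y') ^ 2 ≤ |y ^ 2 - y' ^ 2| := by
        have h0 : |y - y'| ≤ |y + y'| := by
          have : decide (0 ≤ y) = decide (0 ≤ y') := hs.trans hs'.symm
          rw [decide_eq_decide] at this
          apply sq_le_sq.mp
          have : 0 ≤ y * y' := by
            by_cases h : 0 ≤ y
            · exact mul_nonneg h (this.mp h)
            · have h' := mt this.mpr h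
              push Not at h h'
              exact (mul_pos_of_neg_of_neg h h').le
          nlinarith
        rw [← sq_abs, sq, show y ^ 2 - y' ^ 2 = (y - y') * (y + y') by ring, abs_mul]
        gcongr
      have hsq : ((w : ℚ) * (y - y')) ^ 2 * g ≤ 8 * X := by
        have e : ((w : ℚ) ^ 2 * g) * (y ^ 2 - y' ^ 2) = 4 * (P' - P) := by
          push_cast at hP hP'
          linear_combination hP' - hP
        have hb : |P' - P| ≤ 2 * X := by
          have := abs_sub P' P
          omega
        have hb' : |(P' : ℚ) - P| ≤ 2 * X := by exact_mod_cast hb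
        calc ((w : ℚ) * (y - y')) ^ 2 * g = ((w : ℚ) ^ 2 * g) * (y - y') ^ 2 := by ring
          _ ≤ ((w : ℚ) ^ 2 * g) * |y ^ 2 - y' ^ 2| := by gcongr
          _ = |((w : ℚ) ^ 2 * g) * (y ^ 2 - y' ^ 2)| := by
              rw [abs_mul, abs_of_nonneg (by positivity : (0 : ℚ) ≤ (w : ℚ) ^ 2 * g)]
          _ = 4 * |(P' : ℚ) - P| := by rw [e, abs_mul]; norm_num
          _ ≤ 8 * X := by linarith
      have hsq' : ((((w : ℚ) * (y - y') : ℚ)) : ℝ) ^ 2 * g ≤ 8 * X := by exact_mod_cast hsq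
      have hg0' : (0 : ℝ) < g := by exact_mod_cast hg0
      apply le_of_abs_le
      apply abs_le_of_sq_le_sq _ (by positivity)
      rw [mul_pow, Real.sq_sqrt (by positivity)]
      rw [← le_div_iff₀ hg0'] at hsq'
      have : (0 : ℝ) ≤ X / g := by positivity
      rw [mul_div_assoc] at hsq'
      linarith
  rw [hs]
  push_cast
  calc _ ≤ ∑ k ∈ E.divisors ×ˢ (Finset.univ : Finset Bool), (1 + 3 * √(X / g : ℝ)) :=
        Finset.sum_le_sum hfib
    _ = (1 + 3 * √(X / g : ℝ)) * (2 * E.divisors.card) := by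
        rw [Finset.sum_const, Finset.card_product]; simp; ring
    _ ≤ _ := by
        have := hD E hE0 hEX
        gcongr

lemma sum_bound (X : ℕ) (hX : 0 < X) (g w : ℕ → ℕ)
    (h : ∀ Q ∈ Finset.Icc 1 X, w Q ^ 2 * g Q = Q ∧ 0 < w Q ∧ 0 < g Q) :
    ∑ Q ∈ Finset.Icc 1 X, √(X / g Q : ℝ) ≤ X * (1 + Real.log X) := by
  have inj : Set.InjOn (fun Q => (⟨g Q, w Q⟩ : (_ : ℕ) × ℕ)) (Finset.Icc 1 X : Finset ℕ) := by
    intro Q hQ Q' hQ' e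
    simp only [Sigma.mk.injEq, heq_eq_eq] at e
    rw [← (h Q hQ).1, ← (h Q' hQ').1, e.1, e.2]
  have step : ∑ Q ∈ Finset.Icc 1 X, √(X / g Q : ℝ) ≤
      ∑ p ∈ (Finset.Icc 1 X).sigma (fun a => Finset.Icc 1 ⌊√(X / a : ℝ)⌋₊), √(X / p.1 : ℝ) := by
    rw [← Finset.sum_image (f := fun p : (_ : ℕ) × ℕ => √(X / p.1 : ℝ)) inj]
    refine Finset.sum_le_sum_of_subset_of_nonneg ?_ (fun _ _ _ => by positivity)
    intro p hp
    simp only [Finset.mem_image] at hp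
    obtain ⟨Q, hQ, rfl⟩ := hp
    obtain ⟨h1, h2, h3⟩ := h Q hQ
    rw [Finset.mem_Icc] at hQ
    simp only [Finset.mem_sigma, Finset.mem_Icc]
    refine ⟨⟨h3, ?_⟩, h2, ?_⟩
    · refine le_trans ?_ hQ.2
      conv_rhs => rw [← h1]
      exact Nat.le_mul_of_pos_left _ (by positivity)
    · apply Nat.le_floor
      apply Real.le_sqrt_of_sq_le
      rw [le_div_iff₀ (by exact_mod_cast h3)]
      have : w Q ^ 2 * g Q ≤ X := by rw [h1]; exact hQ.2
      exact_mod_cast this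
  refine step.trans ?_
  rw [Finset.sum_sigma]
  calc _ ≤ ∑ a ∈ Finset.Icc 1 X, (X : ℝ) * ((a : ℝ)⁻¹) := by
        refine Finset.sum_le_sum fun a ha => ?_
        simp only [Finset.sum_const, Nat.card_Icc, nsmul_eq_mul, Nat.add_sub_cancel]
        have h1 := Nat.floor_le (Real.sqrt_nonneg (X / a : ℝ))
        calc _ ≤ √(X / a : ℝ) * √(X / a : ℝ) := by gcongr
          _ = X / a := Real.mul_self_sqrt (by positivity)
          _ = _ := div_eq_mul_inv _ _
    _ = X * (harmonic X : ℝ) := by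
        rw [← Finset.mul_sum, harmonic_eq_sum_Icc]; push_cast; rfl
    _ ≤ _ := by
        gcongr
        exact harmonic_le_one_add_log X

lemma fiber_b (T : Finset (ℚ × ℚ × ℚ)) (X Q : ℕ) (y Δ : ℚ) (D : ℝ)
    (hD : ∀ n : ℕ, n ≠ 0 → n ≤ X → (n.divisors.card : ℝ) ≤ D)
    (hD1 : 1 ≤ D) (hQ0 : Q ≠ 0) (hQX : Q ≤ X)
    (hT : ∀ v ∈ T, v.1 = y ∧ v.2.1.den * v.2.2.den = Q ∧
      v.2.1.num.natAbs * v.2.2.num.natAbs ≤ X ∧ v.2.1 ≠ 0 ∧ v.2.2 ≠ 0 ∧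
      y ^ 2 + 4 * (v.2.1 * v.2.2) = Δ) :
    (T.card : ℝ) ≤ 2 * D ^ 2 := by
  set P : ℕ := ((Q : ℚ) * (Δ - y ^ 2) / 4).num.natAbs with hP
  have hPv : ∀ v ∈ T, v.2.1.num.natAbs * v.2.2.num.natAbs = P := by
    intro v hv
    obtain ⟨-, h2, -, -, -, h6⟩ := hT v hv
    have : (Q : ℚ) * (Δ - y ^ 2) / 4 = ((v.2.1.num * v.2.2.num : ℤ) : ℚ) := by
      rw [← h2, ← h6]
      push_cast
      rw [← Rat.mul_den_eq_num v.2.1, ← Rat.mul_den_eq_num v.2.2]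
      ring
    rw [hP, this, Rat.num_intCast, Int.natAbs_mul]
  rcases T.eq_empty_or_nonempty with rfl | ⟨v0, hv0⟩
  · simp; positivity
  have hP0 : P ≠ 0 := by
    rw [← hPv v0 hv0]
    obtain ⟨-, -, -, h4, h5, -⟩ := hT v0 hv0
    simp [h4, h5]
  have hPX : P ≤ X := by
    rw [← hPv v0 hv0]
    exact (hT v0 hv0).2.2.1
  have key : T.card ≤ (Q.divisors ×ˢ P.divisors ×ˢ (Finset.univ : Finset Bool)).card := by
    refine Finset.card_le_card_of_injOn
      (fun v => (v.2.1.den, v.2.1.num.natAbs, decide (0 ≤ v.2.1))) ?_ ?_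
    · intro v hv
      simp only [Finset.coe_product, Set.mem_prod, Finset.mem_coe, Nat.mem_divisors,
        Finset.mem_univ, and_true]
      exact ⟨⟨⟨_, (hT v hv).2.1.symm⟩, hQ0⟩, ⟨_, (hPv v hv).symm⟩, hP0⟩
    · rintro ⟨y1, b, c⟩ hv ⟨y2, b', c'⟩ hv' e
      obtain ⟨e1, -, -, hb, hc, h6⟩ := hT _ hv
      obtain ⟨e1', -, -, hb', hc', h6'⟩ := hT _ hv'
      simp only [Prod.mk.injEq, decide_eq_decide] at *
      obtain ⟨ed, en, es⟩ := e
      have ebb : b = b' := by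
        apply Rat.ext _ ed
        rw [← Rat.num_nonneg, ← Rat.num_nonneg] at es
        omega
      refine ⟨e1.trans e1'.symm, ebb, ?_⟩
      subst ebb
      have : b * c = b * c' := by linarith
      exact mul_left_cancel₀ hb this
  rw [Finset.card_product, Finset.card_product, Finset.card_univ, Fintype.card_bool] at key
  have a1 := hD Q hQ0 hQX
  have a2 := hD P hP0 hPX
  calc (T.card : ℝ) ≤ (Q.divisors.card : ℝ) * (P.divisors.card * 2) := by exact_mod_cast key
    _ ≤ D * (D * 2) := by gcongr
    _ = _ := by ring

lemma count_nonzero (T : Finset (ℚ × ℚ × ℚ)) (N : ℕ) (hN : 0 < N) (Δ : ℚ) (D : ℝ)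
    (hD : ∀ n : ℕ, n ≠ 0 → n ≤ N ^ 2 → (n.divisors.card : ℝ) ≤ D)
    (hT : ∀ v ∈ T, v.1.den ≤ N ^ 2 ∧ v.2.1.den ≤ N ∧ v.2.2.den ≤ N ∧
      v.2.1.num.natAbs ≤ N ∧ v.2.2.num.natAbs ≤ N ∧ v.2.1 ≠ 0 ∧ v.2.2 ≠ 0 ∧
      v.1 ^ 2 + 4 * (v.2.1 * v.2.2) = Δ) :
    (T.card : ℝ) ≤ 4 * D ^ 3 * ((N ^ 2 : ℕ) * (4 + 3 * Real.log (N ^ 2 : ℕ))) := by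
  classical
  set X := N ^ 2 with hX
  have hX0 : 0 < X := by positivity
  have hD1 : 1 ≤ D := by
    have := hD 1 one_ne_zero hX0
    simpa using this
  choose g w hgw hgs using Nat.sq_mul_squarefree
  have hpos : ∀ Q ∈ Finset.Icc 1 X, w Q ^ 2 * g Q = Q ∧ 0 < w Q ∧ 0 < g Q := by
    intro Q hQ
    rw [Finset.mem_Icc] at hQ
    refine ⟨hgw Q, ?_, Nat.pos_of_ne_zero (hgs Q).ne_zero⟩
    rcases Nat.eq_zero_or_pos (w Q) with h | h
    · have := hgw Q
      rw [h] at this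
      simp at this
      omega
    · exact h
  have maps : ∀ v ∈ T, v.2.1.den * v.2.2.den ∈ Finset.Icc 1 X := by
    intro v hv
    obtain ⟨-, h2, h3, -⟩ := hT v hv
    rw [Finset.mem_Icc]
    refine ⟨Nat.mul_pos v.2.1.den_pos v.2.2.den_pos, ?_⟩
    rw [hX, sq]
    exact Nat.mul_le_mul h2 h3
  have hs := Finset.card_eq_sum_card_fiberwise
    (f := fun v : ℚ × ℚ × ℚ => v.2.1.den * v.2.2.den) (s := T) maps
  have hfib : ∀ Q ∈ Finset.Icc 1 X,
      ((T.filter (fun v : ℚ × ℚ × ℚ => v.2.1.den * v.2.2.den = Q)).card : ℝ) ≤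
        (1 + 3 * √(X / g Q : ℝ)) * (4 * D ^ 3) := by
    intro Q hQ
    obtain ⟨hQe, hw0, hg0⟩ := hpos Q hQ
    rw [Finset.mem_Icc] at hQ
    set TQ := T.filter (fun v : ℚ × ℚ × ℚ => v.2.1.den * v.2.2.den = Q) with hTQ
    have hPX : ∀ v ∈ T, v.2.1.num.natAbs * v.2.2.num.natAbs ≤ X := by
      intro v hv
      obtain ⟨-, -, -, h4, h5, -⟩ := hT v hv
      rw [hX, sq]
      exact Nat.mul_le_mul h4 h5
    have hc1 := count_y (TQ.image (fun v => v.1)) (w Q) (g Q) X hw0 (hgs Q) Δ D hX0 hD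
      (by
        intro y hy
        obtain ⟨v, hv, rfl⟩ := Finset.mem_image.mp hy
        exact (hT v (Finset.mem_filter.mp hv).1).1)
      (by
        intro y hy
        obtain ⟨v, hv, rfl⟩ := Finset.mem_image.mp hy
        obtain ⟨hv, hvQ⟩ := Finset.mem_filter.mp hv
        have h8 := (hT v hv).2.2.2.2.2.2.2
        refine ⟨v.2.1.num * v.2.2.num, ?_, ?_⟩
        · rw [hQe, ← hvQ, ← h8]
          push_cast
          rw [← Rat.mul_den_eq_num v.2.1, ← Rat.mul_den_eq_num v.2.2]
          ring
        · have := hPX v hv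
          rw [← Int.natAbs_mul] at this
          rw [Int.abs_eq_natAbs]
          exact_mod_cast this)
    have hs2 := Finset.card_eq_sum_card_image (fun v : ℚ × ℚ × ℚ => v.1) TQ
    rw [hs2]
    push_cast
    calc _ ≤ ∑ y ∈ TQ.image (fun v => v.1), (2 * D ^ 2) := by
          refine Finset.sum_le_sum fun y hy => ?_
          refine fiber_b _ X Q y Δ D hD hD1 (by omega) hQ.2 ?_
          intro v hv
          simp only [hTQ, Finset.mem_filter] at hv
          obtain ⟨⟨hv, hvQ⟩, hvy⟩ := hv
          obtain ⟨-, -, -, -, -, h6, h7, h8⟩ := hT v hv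
          refine ⟨hvy, hvQ, hPX v hv, h6, h7, ?_⟩
          rw [← hvy]; exact h8
      _ = ((TQ.image (fun v => v.1)).card : ℝ) * (2 * D ^ 2) := by
          rw [Finset.sum_const, nsmul_eq_mul]
      _ ≤ (1 + 3 * √(X / g Q : ℝ)) * (2 * D) * (2 * D ^ 2) := by gcongr
      _ = _ := by ring
  rw [hs]
  push_cast
  have hsum := sum_bound X hX0 g w hpos
  calc _ ≤ ∑ Q ∈ Finset.Icc 1 X, (1 + 3 * √(X / g Q : ℝ)) * (4 * D ^ 3) :=
        Finset.sum_le_sum hfib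
    _ = 4 * D ^ 3 * (X + 3 * ∑ Q ∈ Finset.Icc 1 X, √(X / g Q : ℝ)) := by
        rw [← Finset.sum_mul, Finset.sum_add_distrib, ← Finset.mul_sum]
        simp
        ring
    _ ≤ 4 * D ^ 3 * (X + 3 * (X * (1 + Real.log X))) := by gcongr
    _ = _ := by ring

/-- Rationals of height at most `N`. -/
noncomputable def fareyFin (N : ℕ) : Finset ℚ :=
  ((Finset.Icc (-(N : ℤ)) N) ×ˢ (Finset.Icc 1 N)).image (fun p => (p.1 : ℚ) / (p.2 : ℚ))

lemma mem_fareyFin (N : ℕ) (x : ℚ) (h1 : x.num.natAbs ≤ N) (h2 : x.den ≤ N) :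
    x ∈ fareyFin N := by
  refine Finset.mem_image.mpr ⟨(x.num, x.den), ?_, Rat.num_div_den x⟩
  have := x.den_pos
  simp only [Finset.mem_product, Finset.mem_Icc]
  omega

lemma card_fareyFin (N : ℕ) : (fareyFin N).card ≤ (2 * N + 1) * N := by
  refine Finset.card_image_le.trans ?_
  rw [Finset.card_product, Int.card_Icc, Nat.card_Icc]
  apply Nat.mul_le_mul <;> omega

lemma count_zero (T : Finset (ℚ × ℚ × ℚ)) (N : ℕ) (Δ : ℚ)
    (hT : ∀ v ∈ T, v.2.1 ∈ fareyFin N ∧ v.2.2 ∈ fareyFin N ∧ v.2.1 * v.2.2 = 0 ∧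
      v.1 ^ 2 + 4 * (v.2.1 * v.2.2) = Δ) :
    T.card ≤ 4 * ((2 * N + 1) * N) := by
  have key : T.card ≤ ((Finset.univ : Finset Bool) ×ˢ (Finset.univ : Finset Bool) ×ˢ
      fareyFin N).card := by
    refine Finset.card_le_card_of_injOn
      (fun v => (decide (0 ≤ v.1), decide (v.2.1 = 0), v.2.1 + v.2.2)) ?_ ?_
    · rintro ⟨y, b, c⟩ hv
      obtain ⟨h1, h2, h3, -⟩ := hT _ hv
      simp only [Finset.coe_product, Set.mem_prod, Finset.mem_coe, Finset.mem_univ, true_and]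
      rcases mul_eq_zero.mp h3 with h | h <;> simp only at h h1 h2 <;> simp [h, h1, h2]
    · rintro ⟨y, b, c⟩ hv ⟨y', b', c'⟩ hv' e
      obtain ⟨-, -, h3, h4⟩ := hT _ hv
      obtain ⟨-, -, h3', h4'⟩ := hT _ hv'
      simp only [Prod.mk.injEq, decide_eq_decide] at *
      obtain ⟨e1, e2, e3⟩ := e
      rw [h3] at h4
      rw [h3'] at h4'
      have hy : y = y' := by
        have : y ^ 2 = y' ^ 2 := by linarith
        rcases sq_eq_sq_iff_eq_or_eq_neg.mp this with h | h
        · exact h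
        · rcases le_total 0 y with h0 | h0
          · have := e1.mp h0
            linarith
          · have : 0 ≤ y' := by linarith
            have := e1.mpr this
            linarith
      refine ⟨hy, ?_⟩
      by_cases hb : b = 0
      · have hb' := e2.mp hb
        subst hb hb'
        exact ⟨rfl, by linarith⟩
      · have hb' := mt e2.mpr hb
        have hc : c = 0 := (mul_eq_zero.mp h3).resolve_left hb
        have hc' : c' = 0 := (mul_eq_zero.mp h3').resolve_left hb'
        subst hc hc'
        exact ⟨by linarith, rfl⟩
  rw [Finset.card_product, Finset.card_product, Finset.card_univ, Fintype.card_bool] at key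
  have := card_fareyFin N
  omega

lemma count_all (N : ℕ) (hN : 0 < N) (f : Polynomial ℚ) (D : ℝ)
    (hD : ∀ n : ℕ, n ≠ 0 → n ≤ N ^ 2 → (n.divisors.card : ℝ) ≤ D)
    (S : Set (Matrix (Fin 2) (Fin 2) ℚ))
    (hS : ∀ A ∈ S, (∀ i j, (A i j).num.natAbs ≤ N ∧ (A i j).den ≤ N) ∧ A.charpoly = f) :
    (S.ncard : ℝ) ≤ 12 * (N : ℝ) ^ 2 +
      4 * D ^ 3 * ((N ^ 2 : ℕ) * (4 + 3 * Real.log (N ^ 2 : ℕ))) := by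
  classical
  set t : ℚ := -f.coeff 1 with ht
  set n : ℚ := f.coeff 0 with hn
  set Δ : ℚ := t ^ 2 - 4 * n with hΔ
  have htr : ∀ A ∈ S, A 0 0 + A 1 1 = t ∧ A 0 0 * A 1 1 - A 0 1 * A 1 0 = n := by
    intro A hA
    have h := (hS A hA).2
    rw [Matrix.charpoly_fin_two] at h
    rw [ht, hn, ← h]
    simp [Polynomial.coeff_X, Matrix.trace_fin_two, Matrix.det_fin_two]
  let φ : Matrix (Fin 2) (Fin 2) ℚ → ℚ × ℚ × ℚ := fun A => (A 0 0 - A 1 1, A 0 1, A 1 0)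
  have hinj : Set.InjOn φ S := by
    intro A hA B hB e
    simp only [φ, Prod.mk.injEq] at e
    obtain ⟨e1, e2, e3⟩ := e
    have a := (htr A hA).1
    have b := (htr B hB).1
    ext i j
    fin_cases i <;> fin_cases j
    · simp; linarith
    · simpa using e2
    · simpa using e3
    · simp; linarith
  have hfin : S.Finite := by
    refine Set.Finite.subset (Set.Finite.pi' (fun i : Fin 2 => Set.Finite.pi' (fun j : Fin 2 =>
      (fareyFin N).finite_toSet))) ?_
    intro A hA i j
    exact mem_fareyFin N _ ((hS A hA).1 i j).1 ((hS A hA).1 i j).2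
  have hcard : S.ncard = (hfin.toFinset.image φ).card := by
    rw [Set.ncard_eq_toFinset_card S hfin, Finset.card_image_of_injOn]
    simpa using hinj
  set T := hfin.toFinset.image φ with hTdef
  have hT : ∀ v ∈ T, v.1.den ≤ N ^ 2 ∧ v.2.1.den ≤ N ∧ v.2.2.den ≤ N ∧
      v.2.1.num.natAbs ≤ N ∧ v.2.2.num.natAbs ≤ N ∧
      v.1 ^ 2 + 4 * (v.2.1 * v.2.2) = Δ := by
    intro v hv
    obtain ⟨A, hA, rfl⟩ := Finset.mem_image.mp hv
    rw [Set.Finite.mem_toFinset] at hA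
    have h := (hS A hA).1
    refine ⟨?_, (h 0 1).2, (h 1 0).2, (h 0 1).1, (h 1 0).1, ?_⟩
    · have := Nat.le_of_dvd (Nat.mul_pos (A 0 0).den_pos (A 1 1).den_pos)
        (Rat.sub_den_dvd (A 0 0) (A 1 1))
      refine this.trans ?_
      rw [sq]
      exact Nat.mul_le_mul (h 0 0).2 (h 1 1).2
    · obtain ⟨h1, h2⟩ := htr A hA
      rw [hΔ, ← h1, ← h2]
      simp only [φ]
      ring
  have hz := count_zero (T.filter (fun v => v.2.1 * v.2.2 = 0)) N Δ (by
    intro v hv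
    obtain ⟨hv, h0⟩ := Finset.mem_filter.mp hv
    obtain ⟨-, h2, h3, h4, h5, h6⟩ := hT v hv
    exact ⟨mem_fareyFin N _ h4 h2, mem_fareyFin N _ h5 h3, h0, h6⟩)
  have hnz := count_nonzero (T.filter (fun v => ¬ v.2.1 * v.2.2 = 0)) N hN Δ D hD (by
    intro v hv
    obtain ⟨hv, h0⟩ := Finset.mem_filter.mp hv
    obtain ⟨h1, h2, h3, h4, h5, h6⟩ := hT v hv
    exact ⟨h1, h2, h3, h4, h5, left_ne_zero_of_mul h0, right_ne_zero_of_mul h0, h6⟩)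
  have hsplit := Finset.card_filter_add_card_filter_not (s := T) (fun v => v.2.1 * v.2.2 = 0)
  rw [hcard, ← hsplit, Nat.cast_add]
  have hz' : ((T.filter (fun v => v.2.1 * v.2.2 = 0)).card : ℝ) ≤ 12 * (N : ℝ) ^ 2 := by
    have : 4 * ((2 * N + 1) * N) ≤ 12 * N ^ 2 := by nlinarith
    exact_mod_cast hz.trans this
  exact add_le_add hz' hnz

theorem stmt6 :
    ∀ ε > (0 : ℝ), ∃ C : ℝ, ∀ H : ℝ, H ≥ 2 →
      ∀ f : Polynomial ℚ, f.Monic → f.natDegree = 2 →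
      (Set.ncard {A : Matrix (Fin 2) (Fin 2) ℚ |
          (∀ i j, A i j ∈ Farey H) ∧ A.charpoly = f} : ℝ) ≤
        C * H ^ ((2 : ℝ) + ε) := by
  intro ε hε
  set δ : ℝ := ε / 8 with hδ
  have hδ0 : 0 < δ := by positivity
  obtain ⟨C, hC1, hC⟩ := divisor_bound δ hδ0
  refine ⟨12 + 4 * C ^ 3 * (4 + 3 / δ), fun H hH f _ _ => ?_⟩
  have hH0 : 0 < H := by linarith
  have hH1 : 1 ≤ H := by linarith
  set N := ⌊H⌋₊ with hN
  have hNH : (N : ℝ) ≤ H := Nat.floor_le hH0.le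
  have hN0 : 0 < N := Nat.floor_pos.mpr hH1
  set h : ℝ := H ^ (2 * δ) with hh
  have hh1 : 1 ≤ h := Real.one_le_rpow hH1 (by positivity)
  have hX : ((N ^ 2 : ℕ) : ℝ) ≤ H ^ 2 := by push_cast; gcongr
  have hXd : ((N ^ 2 : ℕ) : ℝ) ^ δ ≤ h := by
    calc ((N ^ 2 : ℕ) : ℝ) ^ δ ≤ (H ^ 2) ^ δ := by gcongr
      _ = h := by rw [hh, Real.rpow_mul hH0.le]; norm_num
  have hlog : Real.log (N ^ 2 : ℕ) ≤ h / δ := by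
    have := Real.log_le_rpow_div (x := ((N ^ 2 : ℕ) : ℝ)) (by positivity) hδ0
    refine this.trans ?_
    gcongr
  have main := count_all N hN0 f (C * h) (by
      intro n hn hnX
      refine (hC n hn).trans ?_
      have : (n : ℝ) ^ δ ≤ ((N ^ 2 : ℕ) : ℝ) ^ δ := by
        apply Real.rpow_le_rpow (by positivity) _ hδ0.le
        exact_mod_cast hnX
      have := this.trans hXd
      gcongr)
    {A : Matrix (Fin 2) (Fin 2) ℚ | (∀ i j, A i j ∈ Farey H) ∧ A.charpoly = f} (by
      rintro A ⟨hA, hAf⟩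
      refine ⟨fun i j => ?_, hAf⟩
      obtain ⟨h1, h2⟩ := hA i j
      refine ⟨Nat.le_floor ?_, Nat.le_floor h2⟩
      rw [Nat.cast_natAbs]
      push_cast
      exact h1)
  have hpow : H ^ ((2 : ℝ) + ε) = H ^ 2 * h ^ 4 := by
    rw [Real.rpow_add hH0, hh, ← Real.rpow_natCast (H ^ (2 * δ)), ← Real.rpow_mul hH0.le]
    congr 1
    · norm_num
    · congr 1
      rw [hδ]; push_cast; ring
  rw [hpow]
  refine main.trans ?_
  have b1 : 12 * (N : ℝ) ^ 2 ≤ 12 * (H ^ 2 * h ^ 4) := by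
    have : (N : ℝ) ^ 2 ≤ H ^ 2 := by gcongr
    have h4 : 1 ≤ h ^ 4 := one_le_pow₀ hh1
    nlinarith [sq_nonneg H]
  have b2 : 4 + 3 * Real.log (N ^ 2 : ℕ) ≤ (4 + 3 / δ) * h := by
    have : (4 + 3 / δ) * h = 4 * h + 3 * (h / δ) := by ring
    linarith
  have b3 : 4 * (C * h) ^ 3 * ((N ^ 2 : ℕ) * (4 + 3 * Real.log (N ^ 2 : ℕ))) ≤
      4 * (C * h) ^ 3 * (H ^ 2 * ((4 + 3 / δ) * h)) := by
    have : 0 ≤ Real.log (N ^ 2 : ℕ) := Real.log_natCast_nonneg _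
    gcongr
  calc _ ≤ 12 * (H ^ 2 * h ^ 4) + 4 * (C * h) ^ 3 * (H ^ 2 * ((4 + 3 / δ) * h)) :=
        add_le_add b1 b3
    _ = _ := by ring
end

section
/- Let n ≥ m > 1 be integers. For every ε > 0 there exists a constant C = C(m, n, ε) such that for all real H ≥ 2 the number of m×n matrices with all entries in E(H) and of rank exactly 1 is at most C·H^{n+ε}. -/
/-- The set of Egyptian (unit) fractions `1/a` with `a` a nonzero integer, `|a| ≤ H`. -/
def Egyptian (H : ℝ) : Set ℚ := {x : ℚ | ∃ a : ℤ, a ≠ 0 ∧ (|a| : ℝ) ≤ H ∧ x = 1 / (a : ℚ)}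

/-- A rank one matrix of unit fractions factors through integer vectors. -/
lemma egyptian_factor {m n : ℕ} (hm : 0 < m) (hn : 0 < n) (A : Matrix (Fin m) (Fin n) ℚ)
    (a : Fin m → Fin n → ℤ) (ha : ∀ i j, a i j ≠ 0) (hA : ∀ i j, A i j = 1 / (a i j : ℚ))
    (hr : A.rank = 1) :
    ∃ (p : Fin m → ℤ) (q : Fin n → ℤ), ∀ i j, a i j = p i * q j := by
  have hminor : ∀ i j k l, a i j * a k l = a i l * a k j := by
    rw [Matrix.rank_eq_finrank_span_cols, finrank_eq_one_iff'] at hr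
    obtain ⟨v, -, hv⟩ := hr
    have hcol : ∀ j, ∃ c : ℚ, ∀ i, A i j = c * v.1 i := by
      intro j
      obtain ⟨c, hc⟩ := hv ⟨A.col j, Submodule.subset_span ⟨j, rfl⟩⟩
      refine ⟨c, fun i => ?_⟩
      have := congrFun (congrArg Subtype.val hc) i
      exact this.symm
    choose c hc using hcol
    intro i j k l
    have h : A i j * A k l = A i l * A k j := by
      rw [hc, hc, hc, hc]; ring
    rw [hA, hA, hA, hA] at h
    have h1 : (a i j : ℚ) ≠ 0 := by exact_mod_cast ha i j
    have h2 : (a k l : ℚ) ≠ 0 := by exact_mod_cast ha k l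
    have h3 : (a i l : ℚ) ≠ 0 := by exact_mod_cast ha i l
    have h4 : (a k j : ℚ) ≠ 0 := by exact_mod_cast ha k j
    field_simp at h
    have h' : (a i j : ℚ) * a k l = a i l * a k j := by linarith
    exact_mod_cast h'
  let i0 : Fin m := ⟨0, hm⟩
  let j0 : Fin n := ⟨0, hn⟩
  obtain ⟨p, hp, hg⟩ := Finset.extract_gcd (fun i => a i j0) (s := Finset.univ)
    ⟨i0, Finset.mem_univ _⟩
  set g := Finset.univ.gcd (fun i => a i j0) with hgdef
  have hp' : ∀ i, a i j0 = g * p i := fun i => hp i (Finset.mem_univ _)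
  have hg0 : g ≠ 0 := by
    intro h0
    apply ha i0 j0
    rw [hp', h0, zero_mul]
  have hp0 : ∀ i, p i ≠ 0 := by
    intro i h0
    apply ha i j0
    rw [hp', h0, mul_zero]
  have hprop : ∀ i j k, a i j * p k = a k j * p i := by
    intro i j k
    have := hminor i j k j0
    rw [hp', hp'] at this
    apply mul_left_cancel₀ hg0
    linarith
  have hdvd : ∀ i j, p i ∣ a i j := by
    intro i j
    have h1 : p i ∣ Finset.univ.gcd (fun k => a i j * p k) :=
      Finset.dvd_gcd (fun k _ => ⟨a k j, by rw [hprop]; ring⟩)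
    rw [Finset.gcd_mul_left] at h1
    rw [hg, mul_one] at h1
    exact (dvd_normalize_iff).1 h1
  choose q hq using fun j => hdvd i0 j
  refine ⟨p, q, fun i j => ?_⟩
  apply mul_right_cancel₀ (hp0 i0)
  rw [hprop, hq]; ring

/-- Nonzero integers of absolute value at most `N`. -/
noncomputable def nzBall (N : ℕ) : Finset ℤ := (Finset.Icc (-(N : ℤ)) N).erase 0

lemma mem_nzBall {N : ℕ} {x : ℤ} : x ∈ nzBall N ↔ x ≠ 0 ∧ |x| ≤ N := by
  simp [nzBall, abs_le]

lemma card_nzBall (N : ℕ) : (nzBall N).card = 2 * N := by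
  rw [nzBall, Finset.card_erase_of_mem (by simp)]
  simp; omega

lemma sum_nzBall (N : ℕ) : ∑ s ∈ nzBall N, (1 / |(s : ℝ)|) ≤ 2 * (1 + Real.log N) := by
  have h : nzBall N ⊆ ((Finset.Icc 1 N).image (fun k : ℕ => (k : ℤ))) ∪
      ((Finset.Icc 1 N).image (fun k : ℕ => -(k : ℤ))) := by
    intro x hx
    rw [mem_nzBall, abs_le] at hx
    simp only [Finset.mem_union, Finset.mem_image, Finset.mem_Icc]
    rcases lt_or_gt_of_ne hx.1 with h | h
    · right; exact ⟨x.natAbs, by omega, by omega⟩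
    · left; exact ⟨x.natAbs, by omega, by omega⟩
  have hH : ∑ k ∈ Finset.Icc 1 N, (1 / (k : ℝ)) ≤ 1 + Real.log N := by
    have := harmonic_le_one_add_log N
    rw [harmonic_eq_sum_Icc] at this
    push_cast at this
    simpa using this
  calc _ ≤ _ := Finset.sum_le_sum_of_subset_of_nonneg h (fun _ _ _ => by positivity)
    _ ≤ ∑ s ∈ ((Finset.Icc 1 N).image (fun k : ℕ => (k : ℤ))), (1 / |(s : ℝ)|) +
        ∑ s ∈ ((Finset.Icc 1 N).image (fun k : ℕ => -(k : ℤ))), (1 / |(s : ℝ)|) := by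
      rw [← Finset.sum_union_inter]
      exact le_add_of_nonneg_right (Finset.sum_nonneg fun _ _ => by positivity)
    _ = 2 * ∑ k ∈ Finset.Icc 1 N, (1 / (k : ℝ)) := by
      rw [Finset.sum_image (by intro x _ y _ h; simpa using h),
        Finset.sum_image (by intro x _ y _ h; simpa using h)]
      simp [two_mul]
    _ ≤ _ := by linarith

/-- Admissible entries of the second vector. -/
noncomputable def admis {m : ℕ} (N : ℕ) (p : Fin m → ℤ) : Finset ℤ :=
  (nzBall N).filter (fun q => ∀ i, |p i * q| ≤ N)

lemma card_admis {m : ℕ} (N : ℕ) (p : Fin m → ℤ) (hp : ∀ i, p i ≠ 0) (i : Fin m) :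
    ((admis N p).card : ℝ) ≤ 2 * N * (1 / |(p i : ℝ)|) := by
  have hpos : 0 < (p i).natAbs := Int.natAbs_pos.2 (hp i)
  have h : admis N p ⊆ nzBall (N / (p i).natAbs) := by
    intro q hq
    simp only [admis, Finset.mem_filter, mem_nzBall] at hq
    rw [mem_nzBall]
    refine ⟨hq.1.1, ?_⟩
    have h2 := hq.2 i
    rw [Int.abs_eq_natAbs] at h2 ⊢
    rw [Int.natAbs_mul] at h2
    norm_cast at h2 ⊢
    rw [Nat.le_div_iff_mul_le hpos, mul_comm]
    exact h2
  have h1 := Finset.card_le_card h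
  rw [card_nzBall] at h1
  have h2 : ((N / (p i).natAbs : ℕ) : ℝ) ≤ N / ((p i).natAbs : ℝ) := Nat.cast_div_le
  have h3 : ((p i).natAbs : ℝ) = |(p i : ℝ)| := by
    rw [Nat.cast_natAbs]; push_cast; rfl
  rw [h3] at h2
  have h4 : ((admis N p).card : ℝ) ≤ 2 * ((N / (p i).natAbs : ℕ) : ℝ) := by exact_mod_cast h1
  calc _ ≤ _ := h4
    _ ≤ 2 * (N / |(p i : ℝ)|) := by linarith
    _ = _ := by ring

lemma count_bound (m n : ℕ) (hnm : n ≥ m) (hm : m > 1) (H : ℝ) (hH : H ≥ 2) :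
    (Set.ncard {A : Matrix (Fin m) (Fin n) ℚ |
          (∀ i j, A i j ∈ Egyptian H) ∧ A.rank = 1} : ℝ) ≤
        (2 * H) ^ n * (2 * (1 + Real.log H)) ^ m := by
  classical
  set N := ⌊H⌋₊ with hN
  have hNH : (N : ℝ) ≤ H := Nat.floor_le (by linarith)
  have hN1 : 1 ≤ N := Nat.le_floor (by push_cast; linarith)
  let T : Finset (Matrix (Fin m) (Fin n) ℚ) :=
    (Fintype.piFinset fun _ : Fin m => nzBall N).biUnion fun p =>
      (Fintype.piFinset fun _ : Fin n => admis N p).image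
        (fun q => Matrix.of fun i j => 1 / ((p i : ℚ) * q j))
  have hsub : {A : Matrix (Fin m) (Fin n) ℚ |
          (∀ i j, A i j ∈ Egyptian H) ∧ A.rank = 1} ⊆ (T : Set _) := by
    rintro A ⟨hA, hr⟩
    choose a ha haH hAa using hA
    obtain ⟨p, q, hpq⟩ := egyptian_factor (by omega) (by omega) A a ha hAa hr
    have haN : ∀ i j, |p i * q j| ≤ (N : ℤ) := by
      intro i j
      have h1 : ((a i j).natAbs : ℝ) ≤ H := by
        have := haH i j
        rw [Nat.cast_natAbs]; push_cast; exact this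
      have h2 := Nat.le_floor h1
      rw [← hpq, Int.abs_eq_natAbs]
      exact_mod_cast h2
    have hp0 : ∀ i, p i ≠ 0 := by
      intro i h
      apply ha i ⟨0, by omega⟩
      rw [hpq, h, zero_mul]
    have hq0 : ∀ j, q j ≠ 0 := by
      intro j h
      apply ha ⟨0, by omega⟩ j
      rw [hpq, h, mul_zero]
    simp only [T, Finset.coe_biUnion, Set.mem_iUnion, Finset.mem_coe, Finset.mem_image,
      Fintype.mem_piFinset]
    refine ⟨p, fun i => mem_nzBall.2 ⟨hp0 i, ?_⟩, q, fun j => ?_, ?_⟩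
    · refine le_trans ?_ (haN i ⟨0, by omega⟩)
      rw [abs_mul]
      exact le_mul_of_one_le_right (abs_nonneg _) (Int.one_le_abs (hq0 _))
    · refine Finset.mem_filter.2 ⟨mem_nzBall.2 ⟨hq0 j, ?_⟩, fun i => haN i j⟩
      refine le_trans ?_ (haN ⟨0, by omega⟩ j)
      rw [abs_mul]
      exact le_mul_of_one_le_left (abs_nonneg _) (Int.one_le_abs (hp0 _))
    · ext i j
      rw [hAa, hpq]
      simp
  have hcard : Set.ncard {A : Matrix (Fin m) (Fin n) ℚ |
          (∀ i j, A i j ∈ Egyptian H) ∧ A.rank = 1} ≤ T.card := by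
    rw [← Set.ncard_coe_finset]
    exact Set.ncard_le_ncard hsub T.finite_toSet
  have hT : T.card ≤ ∑ p ∈ Fintype.piFinset fun _ : Fin m => nzBall N, (admis N p).card ^ n := by
    refine Finset.card_biUnion_le.trans (Finset.sum_le_sum fun p _ => ?_)
    refine Finset.card_image_le.trans ?_
    simp
  have hterm : ∀ p ∈ Fintype.piFinset fun _ : Fin m => nzBall N,
      ((admis N p).card : ℝ) ^ n ≤ (2 * N) ^ n * ∏ i, (1 / |(p i : ℝ)|) := by
    intro p hp
    have hp0 : ∀ i, p i ≠ 0 := fun i => (mem_nzBall.1 (Fintype.mem_piFinset.1 hp i)).1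
    obtain ⟨k, rfl⟩ := Nat.exists_eq_add_of_le hnm
    have h1 : ((admis N p).card : ℝ) ≤ 2 * N := by
      have := Finset.card_le_card (Finset.filter_subset (fun q => ∀ i, |p i * q| ≤ (N : ℤ)) (nzBall N))
      rw [card_nzBall] at this
      exact_mod_cast this
    have h2 : ((admis N p).card : ℝ) ^ m ≤ (2 * N) ^ m * ∏ i, (1 / |(p i : ℝ)|) := by
      calc ((admis N p).card : ℝ) ^ m = ∏ i : Fin m, ((admis N p).card : ℝ) := by simp
        _ ≤ ∏ i : Fin m, (2 * N * (1 / |(p i : ℝ)|)) :=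
          Finset.prod_le_prod (fun _ _ => by positivity) (fun i _ => card_admis N p hp0 i)
        _ = _ := by rw [Finset.prod_mul_distrib]; simp
    calc ((admis N p).card : ℝ) ^ (m + k)
        = ((admis N p).card : ℝ) ^ m * ((admis N p).card : ℝ) ^ k := pow_add _ _ _
      _ ≤ ((2 * N) ^ m * ∏ i, (1 / |(p i : ℝ)|)) * (2 * N) ^ k := by gcongr
      _ = _ := by ring
  calc _ ≤ (T.card : ℝ) := by exact_mod_cast hcard
    _ ≤ ∑ p ∈ Fintype.piFinset fun _ : Fin m => nzBall N, ((admis N p).card : ℝ) ^ n := by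
      exact_mod_cast hT
    _ ≤ ∑ p ∈ Fintype.piFinset fun _ : Fin m => nzBall N,
        (2 * (N : ℝ)) ^ n * ∏ i, (1 / |(p i : ℝ)|) := Finset.sum_le_sum hterm
    _ = (2 * (N : ℝ)) ^ n * ∏ _i : Fin m, ∑ s ∈ nzBall N, (1 / |(s : ℝ)|) := by
      rw [← Finset.mul_sum, Finset.prod_univ_sum]
    _ = (2 * (N : ℝ)) ^ n * (∑ s ∈ nzBall N, (1 / |(s : ℝ)|)) ^ m := by simp
    _ ≤ (2 * H) ^ n * (2 * (1 + Real.log H)) ^ m := by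
      have hlog : Real.log N ≤ Real.log H := Real.log_le_log (by exact_mod_cast hN1) hNH
      have h5 : ∑ s ∈ nzBall N, (1 / |(s : ℝ)|) ≤ 2 * (1 + Real.log H) :=
        (sum_nzBall N).trans (by linarith)
      have h6 : 0 ≤ ∑ s ∈ nzBall N, (1 / |(s : ℝ)|) := Finset.sum_nonneg fun _ _ => by positivity
      gcongr

theorem stmt8 (m n : ℕ) (hnm : n ≥ m) (hm : m > 1) :
    ∀ ε > (0 : ℝ), ∃ C : ℝ, ∀ H : ℝ, H ≥ 2 →
      (Set.ncard {A : Matrix (Fin m) (Fin n) ℚ |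
          (∀ i j, A i j ∈ Egyptian H) ∧ A.rank = 1} : ℝ) ≤
        C * H ^ ((n : ℝ) + ε) := by
  intro ε hε
  have hm0 : (0 : ℝ) < m := by exact_mod_cast (by omega : 0 < m)
  set δ := ε / m with hδ
  have hδ0 : 0 < δ := by positivity
  refine ⟨2 ^ n * (2 * (1 + 1 / δ)) ^ m, fun H hH => (count_bound m n hnm hm H hH).trans ?_⟩
  have hH0 : 0 < H := by linarith
  have hlog : Real.log H ≤ H ^ δ / δ := Real.log_le_rpow_div hH0.le hδ0
  have hlog0 : 0 ≤ Real.log H := Real.log_nonneg (by linarith)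
  have h1 : 1 ≤ H ^ δ := Real.one_le_rpow (by linarith) hδ0.le
  have h2 : 2 * (1 + Real.log H) ≤ 2 * (1 + 1 / δ) * H ^ δ := by
    have : 2 * (1 + 1 / δ) * H ^ δ = 2 * (H ^ δ + H ^ δ / δ) := by ring
    rw [this]; linarith
  have h3 : (H ^ δ) ^ m = H ^ ε := by
    rw [← Real.rpow_mul_natCast hH0.le, hδ, div_mul_cancel₀ _ hm0.ne']
  calc (2 * H) ^ n * (2 * (1 + Real.log H)) ^ m
      ≤ (2 * H) ^ n * (2 * (1 + 1 / δ) * H ^ δ) ^ m := by gcongr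
    _ = 2 ^ n * (2 * (1 + 1 / δ)) ^ m * (H ^ n * (H ^ δ) ^ m) := by
      rw [mul_pow, mul_pow _ (H ^ δ)]; ring
    _ = _ := by rw [h3, Real.rpow_add hH0, Real.rpow_natCast]
end
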